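/- Let K have characteristic p, and suppose G is p-nilpotent with a cyclic Sylow p-subgroup, i.e. G has a normal subgroup N whose order is coprime to p such that the quotient G/N is a p-group, and the Sylow p-subgroups of G are cyclic. Then every left ideal C of the twisted group algebra K^αG = K[G,1,α] (the twisted skew group ring with trivial Θ) is principal: there exists a ∈ K^αG such that C is generated by a as a one-sided ideal. -/

import Mathlib

/-!
Let `A = K^αG`, let `N` be the normal `p'`-subgroup and let `x ∈ G` generate `G` modulo `N`; such an
`x` exists because a cyclic Sylow `p`-subgroup maps onto the `p`-group `G/N`. A left ideal `C` is
principal iff it is a quotient of the module `A`, and since `A` is artinian this holds as soon as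
`dim Hom_A(C, S) ≤ dim Hom_A(A, S)` for every simple module `S`: on semisimple modules such
inequalities give a surjection by splitting off one simple summand at a time
(`exists_surjective_of_finrank_hom_le`), and generators lift modulo the radical
(`exists_span_singleton_eq_top`).

The inequality (`finrank_hom_submodule_le`) is a Herbrand quotient argument. For a module `M` let
`V_M` be the space of `K`-linear maps `M → S` commuting with the elements `n̄`, `n ∈ N`. Conjugation
by `x̄` acts on `V_M`, and `Hom_A(M, S)` is the kernel of `T_M : f ↦ x̄ f x̄⁻¹ - f`. Since `|N|` is
invertible in `K`, averaging over `N` shows that restriction `V_A → V_C` is surjective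
(`exists_relHom_extension`). It commutes with the operators `T`, so it induces a surjection from the
cokernel of `T_A` to that of `T_C`; and an endomorphism of a finite-dimensional space has kernel and
cokernel of the same dimension (`finrank_ker_le_of_surjective`).

The ring `A` is realised as the algebra of left multiplications on `G → K`, which contains
invertible elements `ḡ` spanning it; the left ideals of `A` correspond to the subspaces of `G → K`
stable under twisted multiplication through `a ↦ a 1̄`.
-/

open Finset

variable {K : Type*} {G : Type*}

/-- Multiplication of the twisted skew group ring `K[G,Θ,α]`:
`(Σ_g a_g ḡ)·(Σ_h b_h h̄) = Σ_{g,h} a_g·Θ(g)(b_h)·α(g,h)·(gh)‾`. -/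
def tsMul [Field K] [Group G] [Fintype G] [DecidableEq G]
    (Θ : G →* RingAut K) (α : G → G → Kˣ) (a b : G → K) : G → K :=
  fun x => ∑ p : G × G, if p.1 * p.2 = x then a p.1 * Θ p.1 (b p.2) * (α p.1 p.2 : K) else 0

/-- The identity element `1̄` of the twisted skew group ring. -/
def tsOne [Field K] [Group G] [DecidableEq G] : (G → K) := fun x => if x = 1 then 1 else 0

/-- The adjoint map `a ↦ â = Σ_g Θ(g⁻¹)(a_g)·α(g,g⁻¹)·(g⁻¹)‾`. -/
def tsAdj [Field K] [Group G] (Θ : G →* RingAut K) (α : G → G → Kˣ) (a : G → K) : G → K :=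
  fun x => Θ x (a x⁻¹) * (α x⁻¹ x : K)

section ModuleTheory

universe u v

/-! ### Surjections from comparing dimensions of `Hom` spaces -/

section Semisimple

variable {k : Type v} {A : Type u} [Field k] [Ring A] [Algebra k A]

theorem exists_splitting {M S : Type u} [AddCommGroup M] [Module A M] [IsSemisimpleModule A M]
    [AddCommGroup S] [Module A S] (g : M →ₗ[A] S) (hg : Function.Surjective g) :
    Nonempty ((LinearMap.ker g × S) ≃ₗ[A] M) := by
  have : IsSemisimpleModule A S := IsSemisimpleModule.of_surjective g hg
  obtain ⟨s, hs⟩ := IsSemisimpleModule.lifting_property g hg LinearMap.id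
  have hs' : ∀ y, g (s y) = y := fun y => LinearMap.congr_fun hs y
  refine ⟨LinearEquiv.ofBijective ((LinearMap.ker g).subtype.coprod s) ⟨?_, fun m => ?_⟩⟩
  · rw [← LinearMap.ker_eq_bot, LinearMap.ker_eq_bot']
    rintro ⟨⟨m, hm⟩, y⟩ h
    have h' : m + s y = 0 := by simpa using h
    have hy : y = 0 := by
      have := congrArg g h'
      rwa [map_add, LinearMap.mem_ker.1 hm, hs', zero_add, map_zero] at this
    subst hy
    have hm0 : m = 0 := by simpa using h'
    subst hm0
    rfl
  · exact ⟨(⟨m - s (g m), by simp [hs']⟩, g m), by simp⟩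

theorem finite_submodule {M : Type u} [AddCommGroup M] [Module A M] [Module k M]
    [IsScalarTower k A M] [Module.Finite k M] (P : Submodule A M) : Module.Finite k P :=
  Module.Finite.of_injective (P.subtype.restrictScalars k) P.injective_subtype

theorem finite_hom (X T : Type u) [AddCommGroup X] [Module A X] [Module k X]
    [IsScalarTower k A X] [Module.Finite k X] [AddCommGroup T] [Module A T] [Module k T]
    [IsScalarTower k A T] [Module.Finite k T] : Module.Finite k (X →ₗ[A] T) :=
  Module.Finite.of_injective (LinearMap.restrictScalarsₗ k A X T k)
    (LinearMap.restrictScalars_injective k)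


/-- `dim Hom` is additive along a surjection of semisimple modules, since it splits. -/
theorem finrank_hom_eq_add {M S T : Type u} [AddCommGroup M] [Module A M] [Module k M]
    [IsScalarTower k A M] [IsSemisimpleModule A M] [Module.Finite k M]
    [AddCommGroup S] [Module A S] [Module k S] [IsScalarTower k A S] [Module.Finite k S]
    [AddCommGroup T] [Module A T] [Module k T] [IsScalarTower k A T] [Module.Finite k T]
    (g : M →ₗ[A] S) (hg : Function.Surjective g) :
    Module.finrank k (M →ₗ[A] T) =
      Module.finrank k (LinearMap.ker g →ₗ[A] T) + Module.finrank k (S →ₗ[A] T) := by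
  obtain ⟨e⟩ := exists_splitting g hg
  have := finite_submodule (k := k) (LinearMap.ker g)
  have := finite_hom (k := k) (A := A) S T
  have := finite_hom (k := k) (A := A) (LinearMap.ker g) T
  rw [← Module.finrank_prod, (LinearMap.coprodEquiv k (R := A) (M := LinearMap.ker g) (M₂ := S)
    (M₃ := T)).finrank_eq]
  exact (LinearEquiv.congrLeft T k e).symm.finrank_eq

/-- Between semisimple modules, `dim Hom(M, S) ≤ dim Hom(N, S)` for all simple `S` gives a surjection
`N → M`. A simple quotient of `M` is also one of `N`; split it off both sides and induct on
`dim M`, bounded by `n`. -/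
theorem exists_surjective_of_finrank_hom_le (n : ℕ) (M N : Type u)
    [AddCommGroup M] [Module A M] [Module k M] [IsScalarTower k A M] [IsSemisimpleModule A M]
    [Module.Finite k M]
    [AddCommGroup N] [Module A N] [Module k N] [IsScalarTower k A N] [IsSemisimpleModule A N]
    [Module.Finite k N] (hn : Module.finrank k M ≤ n)
    (h : ∀ (S : Type u) [AddCommGroup S] [Module A S] [Module k S] [IsScalarTower k A S]
      [IsSimpleModule A S] [Module.Finite k S],
      Module.finrank k (M →ₗ[A] S) ≤ Module.finrank k (N →ₗ[A] S)) :
    ∃ f : N →ₗ[A] M, Function.Surjective f := by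
  induction n generalizing M N with
  | zero =>
    have : Subsingleton M := Module.finrank_zero_iff.1 (Nat.le_zero.1 hn)
    exact ⟨0, fun m => ⟨0, Subsingleton.elim _ _⟩⟩
  | succ n ih =>
    rcases subsingleton_or_nontrivial M with hM | hM
    · exact ⟨0, fun m => ⟨0, Subsingleton.elim _ _⟩⟩
    obtain ⟨S, hS⟩ := IsSemisimpleModule.exists_simple_submodule A M
    have hSnt : Nontrivial S := IsSimpleModule.nontrivial A S
    obtain ⟨g, hg⟩ := IsSemisimpleModule.extension_property S.subtype S.injective_subtype
      LinearMap.id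
    have hgs : Function.Surjective g := fun y => ⟨y, LinearMap.congr_fun hg y⟩
    have hg0 : g ≠ 0 := by
      rintro rfl
      obtain ⟨y, hy⟩ := exists_ne (0 : S)
      obtain ⟨m, hm⟩ := hgs y
      exact hy (by simpa using hm.symm)
    have := finite_submodule (k := k) S
    have := finite_hom (k := k) (A := A) M S
    have hpos : 0 < Module.finrank k (M →ₗ[A] S) := by
      have : Nontrivial (M →ₗ[A] S) := ⟨g, 0, hg0⟩
      exact Module.finrank_pos
    have hposN : 0 < Module.finrank k (N →ₗ[A] S) := hpos.trans_le (h S)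
    have hnt : Nontrivial (N →ₗ[A] S) := Module.nontrivial_of_finrank_pos hposN
    obtain ⟨q, hq⟩ := exists_ne (0 : N →ₗ[A] S)
    have hqs : Function.Surjective q := LinearMap.surjective_of_ne_zero hq
    have hker : Module.finrank k (LinearMap.ker g) ≤ n := by
      have h1 := LinearMap.finrank_range_add_finrank_ker (g.restrictScalars k)
      have h2 : 0 < Module.finrank k (LinearMap.range (g.restrictScalars k)) := by
        rw [LinearMap.range_eq_top.2 (by exact hgs), finrank_top]
        exact Module.finrank_pos
      have h3 : Module.finrank k (LinearMap.ker (g.restrictScalars k)) =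
        Module.finrank k (LinearMap.ker g) := rfl
      omega
    have := finite_submodule (k := k) (LinearMap.ker g)
    have := finite_submodule (k := k) (LinearMap.ker q)
    obtain ⟨f, hf⟩ := ih (LinearMap.ker g) (LinearMap.ker q) hker (by
      intro T _ _ _ _ _ _
      have h1 := finrank_hom_eq_add (k := k) (T := T) g hgs
      have h2 := finrank_hom_eq_add (k := k) (T := T) q hqs
      have h3 := h T
      omega)
    obtain ⟨e₁⟩ := exists_splitting g hgs
    obtain ⟨e₂⟩ := exists_splitting q hqs
    refine ⟨e₁.toLinearMap ∘ₗ (f.prodMap LinearMap.id) ∘ₗ e₂.symm.toLinearMap, ?_⟩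
    exact e₁.surjective.comp ((Function.Surjective.prodMap hf Function.surjective_id).comp
      e₂.symm.surjective)

theorem finrank_hom_quotient_jacobson_le (M S : Type u)
    [AddCommGroup M] [Module A M] [Module k M] [IsScalarTower k A M] [Module.Finite k M]
    [AddCommGroup S] [Module A S] [Module k S] [IsScalarTower k A S] [Module.Finite k S] :
    Module.finrank k ((M ⧸ Module.jacobson A M) →ₗ[A] S) ≤ Module.finrank k (M →ₗ[A] S) := by
  have := finite_hom (k := k) (A := A) M S
  refine LinearMap.finrank_le_finrank_of_injective
    (f := LinearMap.lcomp k S (Module.jacobson A M).mkQ) ?_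
  intro φ ψ hφ
  exact Submodule.linearMap_qext _ hφ

/-- Every homomorphism from `P` to a simple module factors through `P / rad P`. -/
theorem finrank_hom_le_finrank_hom_quotient_jacobson (P S : Type u)
    [AddCommGroup P] [Module A P] [Module k P] [IsScalarTower k A P] [Module.Finite k P]
    [AddCommGroup S] [Module A S] [Module k S] [IsScalarTower k A S] [IsSimpleModule A S]
    [Module.Finite k S] :
    Module.finrank k (P →ₗ[A] S) ≤ Module.finrank k ((P ⧸ Module.jacobson A P) →ₗ[A] S) := by
  have := finite_hom (k := k) (A := A) (P ⧸ Module.jacobson A P) S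
  have hsurj : Function.Surjective (LinearMap.lcomp k S (Module.jacobson A P).mkQ) := by
    intro φ
    have hφ : Module.jacobson A P ≤ LinearMap.ker φ := by
      have := Module.le_comap_jacobson φ
      rwa [IsSemisimpleModule.jacobson_eq_bot A S] at this
    exact ⟨(Module.jacobson A P).liftQ φ hφ, LinearMap.ext fun _ => rfl⟩
  exact LinearMap.finrank_le_finrank_of_surjective hsurj

/-- If `P` is cyclic and `dim Hom(M, S) ≤ dim Hom(P, S)` for all simple `S`, then `M` is cyclic.
The comparison passes to the quotients by the radicals, which are semisimple, and generators lift
along `M → M / rad M`. -/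
theorem exists_span_singleton_eq_top (M P : Type u)
    [AddCommGroup M] [Module A M] [Module k M] [IsScalarTower k A M] [Module.Finite k M]
    [AddCommGroup P] [Module A P] [Module k P] [IsScalarTower k A P] [Module.Finite k P]
    (p : P) (hp : Submodule.span A {p} = ⊤)
    (h : ∀ (S : Type u) [AddCommGroup S] [Module A S] [Module k S] [IsScalarTower k A S]
      [IsSimpleModule A S] [Module.Finite k S],
      Module.finrank k (M →ₗ[A] S) ≤ Module.finrank k (P →ₗ[A] S)) :
    ∃ m : M, Submodule.span A {m} = ⊤ := by
  have : IsArtinian A M := isArtinian_of_tower k inferInstance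
  have : IsNoetherian A M := isNoetherian_of_tower k inferInstance
  have : IsArtinian A P := isArtinian_of_tower k inferInstance
  have hssM : IsSemisimpleModule A (M ⧸ Module.jacobson A M) := by
    rw [IsArtinian.isSemisimpleModule_iff_jacobson]
    exact Module.jacobson_quotient_jacobson A M
  have hssP : IsSemisimpleModule A (P ⧸ Module.jacobson A P) := by
    rw [IsArtinian.isSemisimpleModule_iff_jacobson]
    exact Module.jacobson_quotient_jacobson A P
  obtain ⟨f, hf⟩ := exists_surjective_of_finrank_hom_le (k := k) (A := A) _
    (M ⧸ Module.jacobson A M) (P ⧸ Module.jacobson A P) le_rfl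
    (fun S _ _ _ _ _ _ => (finrank_hom_quotient_jacobson_le M S).trans
      ((h S).trans (finrank_hom_le_finrank_hom_quotient_jacobson P S)))
  obtain ⟨m, hm⟩ := Submodule.mkQ_surjective _ (f (Submodule.Quotient.mk p))
  refine ⟨m, ?_⟩
  by_contra hne
  -- Otherwise `m` lies in a maximal submodule, and this contains the radical.
  obtain ⟨I, hI, hmI⟩ := (eq_top_or_exists_le_coatom (Submodule.span A {m})).resolve_left hne
  apply hI.1
  rw [eq_top_iff]
  intro y _
  obtain ⟨b, hb⟩ := hf (Submodule.Quotient.mk y)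
  obtain ⟨q, rfl⟩ := Submodule.mkQ_surjective _ b
  obtain ⟨a, rfl⟩ := Submodule.mem_span_singleton.1 (hp ▸ Submodule.mem_top : q ∈ _)
  have h1 : (Submodule.Quotient.mk (a • m) : M ⧸ Module.jacobson A M) =
      Submodule.Quotient.mk y := by
    rw [← hb, Submodule.Quotient.mk_smul]
    change a • (Module.jacobson A M).mkQ m = _
    rw [hm, ← map_smul, map_smul (Module.jacobson A P).mkQ]
    rfl
  have h2 : a • m - y ∈ I := Submodule.mem_sInf.1 ((Submodule.Quotient.eq _).1 h1) I hI
  have h3 : a • m ∈ I := I.smul_mem a (hmI (Submodule.mem_span_singleton_self m))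
  simpa using I.sub_mem h3 h2

end Semisimple

/-! ### Homomorphisms over an algebra spanned by a projective representation -/

section CrossedProduct

variable {k : Type v} {A : Type u} [Field k] [Ring A] [Algebra k A]
variable [Group G]

/-- The kernel of an endomorphism has the dimension of its cokernel, and cokernels of compatible
endomorphisms inherit surjectivity. -/
theorem finrank_ker_le_of_surjective {V W : Type*} [AddCommGroup V] [Module k V]
    [Module.Finite k V] [AddCommGroup W] [Module k W] (S : V →ₗ[k] V) (T : W →ₗ[k] W)
    (r : V →ₗ[k] W) (hr : Function.Surjective r) (h : r ∘ₗ S = T ∘ₗ r) :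
    Module.finrank k (LinearMap.ker T) ≤ Module.finrank k (LinearMap.ker S) := by
  have : Module.Finite k W := Module.Finite.of_surjective r hr
  have hle : LinearMap.range S ≤ (LinearMap.range T).comap r := by
    rintro _ ⟨v, rfl⟩
    exact ⟨r v, (LinearMap.congr_fun h v).symm⟩
  have hsurj : Function.Surjective ((LinearMap.range S).mapQ (LinearMap.range T) r hle) := by
    intro w
    obtain ⟨w, rfl⟩ := Submodule.mkQ_surjective _ w
    obtain ⟨v, rfl⟩ := hr w
    exact ⟨Submodule.Quotient.mk v, rfl⟩
  have h1 := LinearMap.finrank_le_finrank_of_surjective hsurj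
  have h2 := (LinearMap.range S).finrank_quotient_add_finrank
  have h3 := (LinearMap.range T).finrank_quotient_add_finrank
  have h4 := LinearMap.finrank_range_add_finrank_ker S
  have h5 := LinearMap.finrank_range_add_finrank_ker T
  omega

/-- The `k`-linear maps `M → S` commuting with `u n` for all `n ∈ N`, that is, the homomorphisms
over the subalgebra generated by `u N`. -/
def relHom (u : G → Aˣ) (N : Subgroup G) (M S : Type u) [AddCommGroup M] [Module A M] [Module k M]
    [AddCommGroup S] [Module A S] [Module k S] [IsScalarTower k A S] : Submodule k (M →ₗ[k] S) where
  carrier := {f | ∀ n ∈ N, ∀ m, f ((u n : A) • m) = (u n : A) • f m}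
  add_mem' := fun hf hg n hn m => by
    simp only [LinearMap.add_apply, hf n hn m, hg n hn m, smul_add]
  zero_mem' := fun n _ m => by simp
  smul_mem' := fun c f hf n hn m => by
    simp only [LinearMap.smul_apply, hf n hn m, smul_comm c]

variable (u : G → Aˣ)

/-- Conjugation `f ↦ x f x⁻¹` by a unit `x` on `k`-linear maps. -/
def conjHom (x : Aˣ) (M S : Type u) [AddCommGroup M] [Module A M] [Module k M]
    [IsScalarTower k A M]
    [AddCommGroup S] [Module A S] [Module k S] [IsScalarTower k A S] :
    (M →ₗ[k] S) →ₗ[k] (M →ₗ[k] S) where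
  toFun f := Algebra.lsmul k k S (x : A) ∘ₗ f ∘ₗ Algebra.lsmul k k M ((x⁻¹ : Aˣ) : A)
  map_add' f g := by ext; simp
  map_smul' c f := by ext; simp [smul_comm c]

theorem conjHom_apply (x : Aˣ) {M S : Type u} [AddCommGroup M] [Module A M] [Module k M]
    [IsScalarTower k A M]
    [AddCommGroup S] [Module A S] [Module k S] [IsScalarTower k A S] (f : M →ₗ[k] S) (m : M) :
    conjHom x M S f m = (x : A) • f (((x⁻¹ : Aˣ) : A) • m) := rfl

/-- `relHom` is stable under conjugation by `u x`, because `N` is normal. -/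
theorem conjHom_mem_relHom
    (hu : ∀ g h, ∃ c : kˣ, (u g * u h : A) = (c : k) • (u (g * h) : A))
    (N : Subgroup G) [hN : N.Normal] (x : G) {M S : Type u}
    [AddCommGroup M] [Module A M] [Module k M] [IsScalarTower k A M]
    [AddCommGroup S] [Module A S] [Module k S] [IsScalarTower k A S]
    (f : M →ₗ[k] S) (hf : f ∈ relHom u N M S) : conjHom (u x) M S f ∈ relHom u N M S := by
  intro n hn m
  -- `u n * u x = d • u x * u n'` for `n' = x⁻¹ n x ∈ N` and a nonzero scalar `d`.
  have hn' : x⁻¹ * n * x ∈ N := by simpa using hN.conj_mem n hn x⁻¹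
  obtain ⟨c₁, h₁⟩ := hu n x
  obtain ⟨c₂, h₂⟩ := hu x (x⁻¹ * n * x)
  have h₂' : x * (x⁻¹ * n * x) = n * x := by group
  rw [h₂'] at h₂
  have hd : (u n * u x : A) = ((c₁ * c₂⁻¹ : kˣ) : k) • (u x * u (x⁻¹ * n * x) : A) := by
    rw [h₁, h₂, smul_smul]
    simp
  have hd' : ((((u x)⁻¹ : Aˣ) : A) * u n) =
      ((c₁ * c₂⁻¹ : kˣ) : k) • ((u (x⁻¹ * n * x) : A) * (((u x)⁻¹ : Aˣ) : A)) := by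
    have : (u n : A) = (((c₁ * c₂⁻¹ : kˣ) : k) • (u x * u (x⁻¹ * n * x) : A)) *
        (((u x)⁻¹ : Aˣ) : A) := by
      rw [← hd, mul_assoc, Units.mul_inv, mul_one]
    rw [this, smul_mul_assoc, mul_smul_comm, mul_assoc (u x : A), Units.inv_mul_cancel_left]
  simp only [conjHom_apply]
  rw [smul_smul, hd', smul_assoc, map_smul, mul_smul, hf _ hn', smul_smul (u n : A), hd,
    smul_assoc, smul_comm (u x : A), mul_smul (u x : A)]

/-- Averaging over `N` (Maschke): every map on a submodule that commutes with `u N` extends to a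
map on the whole module that commutes with `u N`. -/
theorem exists_relHom_extension
    (hu : ∀ g h, ∃ c : kˣ, (u g * u h : A) = (c : k) • (u (g * h) : A))
    (N : Subgroup G) [Fintype N] (hcard : (Fintype.card N : k) ≠ 0)
    {M S : Type u}
    [AddCommGroup M] [Module A M] [Module k M] [IsScalarTower k A M]
    [AddCommGroup S] [Module A S] [Module k S] [IsScalarTower k A S]
    (C : Submodule A M) (f : C →ₗ[k] S) (hf : f ∈ relHom u N C S) :
    ∃ F ∈ relHom (k := k) u N M S, ∀ c : C, F c = f c := by
  obtain ⟨F, hF⟩ := LinearMap.exists_extend (p := C.restrictScalars k) f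
  have hF' : ∀ c : C, F c = f c := fun c => LinearMap.congr_fun hF c
  have hconj : ∀ (n : N) m, conjHom (u n)⁻¹ M S F m =
      (((u n)⁻¹ : Aˣ) : A) • F ((u n : A) • m) := fun n m => by
    rw [conjHom_apply, inv_inv]
  refine ⟨(Fintype.card N : k)⁻¹ • ∑ n : N, conjHom (u n)⁻¹ M S F, ?_, ?_⟩
  · intro k' hk' m
    simp only [LinearMap.smul_apply, LinearMap.sum_apply, hconj]
    rw [smul_comm (u k' : A)]
    congr 1
    rw [Finset.smul_sum, ← Equiv.sum_comp (Equiv.mulRight (⟨k', hk'⟩ : N))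
      (fun n : N => (u k' : A) • (((u n)⁻¹ : Aˣ) : A) • F ((u n : A) • m))]
    refine Finset.sum_congr rfl fun n _ => ?_
    obtain ⟨c, hc⟩ := hu n k'
    have hinv : (((u n)⁻¹ : Aˣ) : A) * (c : k) • (u (n * k') : A) = u k' := by
      rw [← hc, Units.inv_mul_cancel_left]
    have hinv' : (c : k) • (((u n)⁻¹ : Aˣ) : A) = (u k' : A) * (((u (n * k'))⁻¹ : Aˣ) : A) := by
      rw [← hinv, mul_assoc, smul_mul_assoc, Units.mul_inv, mul_smul_comm, mul_one]
    simp only [Equiv.coe_mulRight, Subgroup.coe_mul]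
    rw [smul_smul (u n : A), hc, smul_assoc, map_smul, smul_comm, ← smul_assoc, hinv', mul_smul]
  · intro c
    simp only [LinearMap.smul_apply, LinearMap.sum_apply, hconj]
    have : ∀ n : N, (((u n)⁻¹ : Aˣ) : A) • F ((u n : A) • (c : M)) = f c := fun n => by
      have h1 := hF' ((u n : A) • c)
      rw [Submodule.coe_smul] at h1
      rw [h1, hf n n.2, smul_smul, Units.inv_mul, one_smul]
    simp only [this, Finset.sum_const, Finset.card_univ]
    rw [← Nat.cast_smul_eq_nsmul k, smul_smul, inv_mul_cancel₀ hcard, one_smul]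

/-- A `k`-linear map is `A`-linear as soon as it commutes with `u N` and with `u x`, where `N` and
`x` generate `G`. -/
theorem map_smul_of_mem_relHom
    (hu : ∀ g h, ∃ c : kˣ, (u g * u h : A) = (c : k) • (u (g * h) : A))
    (hspan : Submodule.span k (Set.range fun g => (u g : A)) = ⊤)
    (N : Subgroup G) (x : G) (hx : ∀ H : Subgroup G, N ≤ H → x ∈ H → H = ⊤)
    {M S : Type u}
    [AddCommGroup M] [Module A M] [Module k M] [IsScalarTower k A M]
    [AddCommGroup S] [Module A S] [Module k S] [IsScalarTower k A S]
    (f : M →ₗ[k] S) (hf : f ∈ relHom u N M S) (hfx : conjHom (u x) M S f = f) (a : A) (m : M) :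
    f (a • m) = a • f m := by
  have hmul : ∀ g h : G, (∀ m, f ((u g : A) • m) = (u g : A) • f m) →
      (∀ m, f ((u h : A) • m) = (u h : A) • f m) →
      ∀ m, f ((u (g * h) : A) • m) = (u (g * h) : A) • f m := by
    intro g h hg hh m
    obtain ⟨c, hc⟩ := hu g h
    have : (u (g * h) : A) = ((c⁻¹ : kˣ) : k) • (u g * u h : A) := by
      rw [hc, smul_smul, Units.inv_mul, one_smul]
    rw [this, smul_assoc, map_smul, mul_smul, hg, hh, smul_assoc, mul_smul]
  have hone : ∃ c : kˣ, (u 1 : A) = (c : k) • (1 : A) := by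
    obtain ⟨c, hc⟩ := hu 1 1
    refine ⟨c, ?_⟩
    rw [mul_one] at hc
    rw [← Units.mul_left_inj (u 1), hc, smul_mul_assoc, one_mul]
  obtain ⟨c₀, hc₀⟩ := hone
  let H : Subgroup G :=
    { carrier := {g | ∀ m, f ((u g : A) • m) = (u g : A) • f m}
      mul_mem' := fun {g h} hg hh => hmul g h hg hh
      one_mem' := fun m => by simp only [hc₀, smul_assoc, map_smul, one_smul]
      inv_mem' := fun {g} hg m => by
        obtain ⟨c, hc⟩ := hu g⁻¹ g
        rw [inv_mul_cancel, hc₀, smul_smul] at hc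
        obtain ⟨d, hd⟩ : ∃ d : k, (u g⁻¹ : A) = d • (((u g)⁻¹ : Aˣ) : A) := by
          refine ⟨c * c₀, ?_⟩
          rw [← Units.mul_left_inj (u g), hc, smul_mul_assoc, Units.inv_mul]
        have h1 := hg ((((u g)⁻¹ : Aˣ) : A) • m)
        rw [smul_smul, Units.mul_inv, one_smul] at h1
        rw [hd, smul_assoc, map_smul, smul_assoc, h1, smul_smul (((u g)⁻¹ : Aˣ) : A),
          Units.inv_mul, one_smul] }
  have hH : H = ⊤ := by
    refine hx H (fun n hn m => hf n hn m) fun m => ?_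
    have h1 := LinearMap.congr_fun hfx ((u x : A) • m)
    rw [conjHom_apply, smul_smul, Units.inv_mul, one_smul] at h1
    exact h1.symm
  have ha : a ∈ Submodule.span k (Set.range fun g => (u g : A)) := hspan ▸ Submodule.mem_top
  induction ha using Submodule.span_induction with
  | mem a h =>
    obtain ⟨g, rfl⟩ := h
    exact (hH ▸ Subgroup.mem_top g : g ∈ H) m
  | zero => simp
  | add a b _ _ h1 h2 => rw [add_smul, add_smul, map_add, h1, h2]
  | smul c a _ h1 => rw [smul_assoc, map_smul, h1, smul_assoc]

/-- `dim Hom_A(C, S) ≤ dim Hom_A(M, S)` for a submodule `C ≤ M`. Both sides are kernels of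
`f ↦ x f x⁻¹ - f` on the spaces of maps commuting with `u N`, and restriction is a surjection
between these spaces. -/
theorem finrank_hom_submodule_le [Module.Finite k A]
    (hu : ∀ g h, ∃ c : kˣ, (u g * u h : A) = (c : k) • (u (g * h) : A))
    (hspan : Submodule.span k (Set.range fun g => (u g : A)) = ⊤)
    (N : Subgroup G) [N.Normal] [Fintype N] (hcard : (Fintype.card N : k) ≠ 0)
    (x : G) (hx : ∀ H : Subgroup G, N ≤ H → x ∈ H → H = ⊤)
    (M S : Type u)
    [AddCommGroup M] [Module A M] [Module k M] [IsScalarTower k A M] [Module.Finite k M]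
    [AddCommGroup S] [Module A S] [Module k S] [IsScalarTower k A S] [Module.Finite k S]
    (C : Submodule A M) :
    Module.finrank k (C →ₗ[A] S) ≤ Module.finrank k (M →ₗ[A] S) := by
  let T (X : Type u) [AddCommGroup X] [Module A X] [Module k X] [IsScalarTower k A X] :
      relHom (k := k) u N X S →ₗ[k] relHom (k := k) u N X S :=
    (conjHom (u x) X S - LinearMap.id).restrict fun f hf =>
      Submodule.sub_mem _ (conjHom_mem_relHom u hu N x f hf) hf
  have hT : ∀ (X : Type u) [AddCommGroup X] [Module A X] [Module k X] [IsScalarTower k A X],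
      Module.finrank k (LinearMap.ker (T X)) = Module.finrank k (X →ₗ[A] S) := by
    intro X _ _ _ _
    have hker : ∀ f : LinearMap.ker (T X), conjHom (u x) X S f.1.1 = f.1.1 := fun f =>
      sub_eq_zero.1 (congrArg Subtype.val (LinearMap.mem_ker.1 f.2))
    refine LinearEquiv.finrank_eq
      { toFun := fun f =>
          { toFun := f.1.1
            map_add' := map_add _
            map_smul' := map_smul_of_mem_relHom u hu hspan N x hx f.1.1 f.1.2 (hker f) }
        map_add' := fun f g => rfl
        map_smul' := fun c f => rfl
        invFun := fun f => ⟨⟨f.restrictScalars k, fun n _ m => f.map_smul _ m⟩, by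
          have h1 : conjHom (u x) X S (f.restrictScalars k) = f.restrictScalars k := by
            ext m
            rw [conjHom_apply, LinearMap.restrictScalars_apply, map_smul, smul_smul,
              Units.mul_inv, one_smul]
            rfl
          exact LinearMap.mem_ker.2 (Subtype.ext (sub_eq_zero.2 h1))⟩
        left_inv := fun f => rfl
        right_inv := fun f => rfl }
  let r : relHom (k := k) u N M S →ₗ[k] relHom (k := k) u N C S :=
    { toFun := fun f => ⟨f.1 ∘ₗ C.subtype.restrictScalars k, fun n hn m => f.2 n hn m⟩
      map_add' := fun f g => rfl
      map_smul' := fun c f => rfl }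
  have hr : Function.Surjective r := by
    rintro ⟨f, hf⟩
    obtain ⟨F, hF, hFf⟩ := exists_relHom_extension u hu N hcard C f hf
    exact ⟨⟨F, hF⟩, Subtype.ext (LinearMap.ext hFf)⟩
  rw [← hT C, ← hT M]
  exact finrank_ker_le_of_surjective (T M) (T C) r hr rfl

/-- Every left ideal of an algebra spanned by units `u g`, multiplicative up to scalars, is
principal, provided `G` has a normal subgroup `N` of order invertible in `k` with `G/N` generated by
a single element. -/
theorem exists_eq_span_singleton [Module.Finite k A]
    (hu : ∀ g h, ∃ c : kˣ, (u g * u h : A) = (c : k) • (u (g * h) : A))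
    (hspan : Submodule.span k (Set.range fun g => (u g : A)) = ⊤)
    (N : Subgroup G) [N.Normal] [Fintype N] (hcard : (Fintype.card N : k) ≠ 0)
    (x : G) (hx : ∀ H : Subgroup G, N ≤ H → x ∈ H → H = ⊤) (C : Submodule A A) :
    ∃ a : A, C = Submodule.span A {a} := by
  have := finite_submodule (k := k) C
  obtain ⟨m, hm⟩ := exists_span_singleton_eq_top (k := k) C A 1
    (Ideal.span_singleton_one) fun S _ _ _ _ _ _ =>
      finrank_hom_submodule_le u hu hspan N hcard x hx A S C
  refine ⟨m, ?_⟩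
  have h := congrArg (Submodule.map C.subtype) hm
  rw [Submodule.map_span, Set.image_singleton, Submodule.map_top, Submodule.range_subtype] at h
  exact h.symm

end CrossedProduct

end ModuleTheory

/-! ### The twisted group algebra -/

section TwistedGroupAlgebra

/-- A cyclic Sylow `p`-subgroup maps onto the `p`-group `G/N`, so one of its elements generates `G`
together with `N`. -/
theorem exists_generator_mod [Group G] [Finite G] {p : ℕ} [Fact p.Prime]
    (N : Subgroup G) [N.Normal] (hquot : IsPGroup p (G ⧸ N))
    (hcyc : ∀ P : Sylow p G, IsCyclic P) :
    ∃ x : G, ∀ H : Subgroup G, N ≤ H → x ∈ H → H = ⊤ := by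
  obtain ⟨P⟩ : Nonempty (Sylow p G) := inferInstance
  let Q : Sylow p (G ⧸ N) := P.mapSurjective (QuotientGroup.mk'_surjective N)
  have hQ : (Q : Subgroup (G ⧸ N)) = ⊤ :=
    (Q.is_maximal' (Q := ⊤) (hquot.to_subgroup ⊤) le_top).symm
  have hmap : P.1.map (QuotientGroup.mk' N) = ⊤ := hQ
  obtain ⟨⟨x, hxP⟩, hx⟩ := (hcyc P).exists_generator
  refine ⟨x, fun H hN hxH => ?_⟩
  have hPH : P.1 ≤ H := by
    intro y hy
    obtain ⟨n, hn⟩ := Subgroup.mem_zpowers_iff.1 (hx ⟨y, hy⟩)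
    have : x ^ n = y := congrArg Subtype.val hn
    exact this ▸ H.zpow_mem hxH n
  rw [eq_top_iff]
  intro g _
  obtain ⟨y, hy, hyg⟩ : QuotientGroup.mk' N g ∈ P.1.map (QuotientGroup.mk' N) :=
    hmap ▸ Subgroup.mem_top _
  have : y⁻¹ * g ∈ N := QuotientGroup.eq.1 hyg
  simpa using H.mul_mem (hPH hy) (hN this)

variable [Field K] [Group G]

/-- Left multiplication by the basis element `ḡ` of the twisted group algebra. -/
def leftMul (α : G → G → Kˣ) (g : G) : Module.End K (G → K) where
  toFun f y := (α g (g⁻¹ * y) : K) * f (g⁻¹ * y)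
  map_add' f f' := by ext; simp [mul_add]
  map_smul' c f := by ext; simp [mul_left_comm]

theorem leftMul_mul {α : G → G → Kˣ}
    (hcoc : ∀ g₁ g₂ g₃ : G, α g₁ (g₂ * g₃) * α g₂ g₃ = α (g₁ * g₂) g₃ * α g₁ g₂) (g h : G) :
    leftMul α g * leftMul α h = (α g h : K) • leftMul α (g * h) := by
  ext1 f
  funext y
  have h1 := hcoc g h (h⁻¹ * (g⁻¹ * y))
  rw [mul_inv_cancel_left] at h1
  have h2 : (α g (g⁻¹ * y) : K) * α h (h⁻¹ * (g⁻¹ * y)) =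
      α (g * h) (h⁻¹ * (g⁻¹ * y)) * α g h := by exact_mod_cast congrArg Units.val h1
  change (α g (g⁻¹ * y) : K) * ((α h (h⁻¹ * (g⁻¹ * y)) : K) * f (h⁻¹ * (g⁻¹ * y))) =
    (α g h : K) * ((α (g * h) ((g * h)⁻¹ * y) : K) * f ((g * h)⁻¹ * y))
  rw [mul_inv_rev, mul_assoc h⁻¹, ← mul_assoc, h2]
  ring

theorem leftMul_one {α : G → G → Kˣ} (hnorm : ∀ g : G, α g 1 = 1 ∧ α 1 g = 1) :
    leftMul α 1 = 1 := by
  ext1 f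
  funext y
  change (α 1 (1⁻¹ * y) : K) * f (1⁻¹ * y) = f y
  simp [(hnorm y).2]

theorem tsMul_eq_sum [Fintype G] [DecidableEq G] (α : G → G → Kˣ) (r f : G → K) :
    tsMul (1 : G →* RingAut K) α r f = (∑ g, r g • leftMul α g) f := by
  funext y
  rw [LinearMap.sum_apply, Finset.sum_apply, tsMul, Fintype.sum_prod_type]
  refine Finset.sum_congr rfl fun g _ => ?_
  have : ∀ h : G, g * h = y ↔ h = g⁻¹ * y := fun h => eq_inv_mul_iff_mul_eq.symm
  simp only [this, Finset.sum_ite_eq', Finset.mem_univ, if_true]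
  change r g * f (g⁻¹ * y) * (α g (g⁻¹ * y) : K) = r g * ((α g (g⁻¹ * y) : K) * f (g⁻¹ * y))
  ring

/-- The twisted group algebra, realised as the algebra of its left multiplications on `G → K`,
so that associativity comes from composition of maps. -/
def twistedAlgebra (α : G → G → Kˣ) (hnorm : ∀ g : G, α g 1 = 1 ∧ α 1 g = 1)
    (hcoc : ∀ g₁ g₂ g₃ : G, α g₁ (g₂ * g₃) * α g₂ g₃ = α (g₁ * g₂) g₃ * α g₁ g₂) :
    Subalgebra K (Module.End K (G → K)) :=
  (Submodule.span K (Set.range (leftMul α))).toSubalgebra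
    (Submodule.subset_span ⟨1, leftMul_one hnorm⟩) fun a b ha hb => by
      have hab := Submodule.mul_mem_mul ha hb
      rw [Submodule.span_mul_span] at hab
      refine Submodule.span_le.2 ?_ hab
      rintro _ ⟨_, ⟨g, rfl⟩, _, ⟨h, rfl⟩, rfl⟩
      have := Submodule.smul_mem _ (α g h : K)
        (Submodule.subset_span ⟨g * h, rfl⟩ : leftMul α (g * h) ∈
          Submodule.span K (Set.range (leftMul α)))
      change leftMul α g * leftMul α h ∈ Submodule.span K (Set.range (leftMul α))
      rwa [← leftMul_mul hcoc] at this

theorem exists_tsMul_eq [Fintype G] [DecidableEq G] {α : G → G → Kˣ}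
    {hnorm : ∀ g : G, α g 1 = 1 ∧ α 1 g = 1}
    {hcoc : ∀ g₁ g₂ g₃ : G, α g₁ (g₂ * g₃) * α g₂ g₃ = α (g₁ * g₂) g₃ * α g₁ g₂}
    (a : twistedAlgebra α hnorm hcoc) :
    ∃ r : G → K, ∀ f, a.1 f = tsMul (1 : G →* RingAut K) α r f := by
  obtain ⟨r, hr⟩ := (Submodule.mem_span_range_iff_exists_fun K).1 a.2
  exact ⟨r, fun f => by rw [tsMul_eq_sum, hr]⟩

theorem exists_eq_tsMul [Fintype G] [DecidableEq G] {α : G → G → Kˣ}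
    {hnorm : ∀ g : G, α g 1 = 1 ∧ α 1 g = 1}
    {hcoc : ∀ g₁ g₂ g₃ : G, α g₁ (g₂ * g₃) * α g₂ g₃ = α (g₁ * g₂) g₃ * α g₁ g₂} (r : G → K) :
    ∃ a : twistedAlgebra α hnorm hcoc, a.1 (tsOne : G → K) = r := by
  refine ⟨⟨∑ g, r g • leftMul α g, (Submodule.mem_span_range_iff_exists_fun K).2 ⟨r, rfl⟩⟩, ?_⟩
  funext y
  rw [LinearMap.sum_apply, Finset.sum_apply]
  change ∑ g, r g * ((α g (g⁻¹ * y) : K) * if g⁻¹ * y = 1 then 1 else 0) = r y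
  rw [Finset.sum_eq_single y]
  · simp [(hnorm y).1]
  · intro g _ hg
    rw [if_neg (fun h => hg (inv_mul_eq_one.1 h)), mul_zero, mul_zero]
  · simp

/-- The invertible elements `ḡ` of the twisted group algebra. -/
def basisUnit (α : G → G → Kˣ) (hnorm : ∀ g : G, α g 1 = 1 ∧ α 1 g = 1)
    (hcoc : ∀ g₁ g₂ g₃ : G, α g₁ (g₂ * g₃) * α g₂ g₃ = α (g₁ * g₂) g₃ * α g₁ g₂) (g : G) :
    (twistedAlgebra α hnorm hcoc)ˣ :=
  have hmem : ∀ g, leftMul α g ∈ twistedAlgebra α hnorm hcoc := fun g =>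
    Submodule.subset_span ⟨g, rfl⟩
  have hr : leftMul α g * ((α g g⁻¹ : K)⁻¹ • leftMul α g⁻¹) = 1 := by
    rw [mul_smul_comm, leftMul_mul hcoc, smul_smul, mul_inv_cancel, leftMul_one hnorm,
      inv_mul_cancel₀ (Units.ne_zero _), one_smul]
  have hl : ((α g⁻¹ g : K)⁻¹ • leftMul α g⁻¹) * leftMul α g = 1 := by
    rw [smul_mul_assoc, leftMul_mul hcoc, smul_smul, inv_mul_cancel, leftMul_one hnorm,
      inv_mul_cancel₀ (Units.ne_zero _), one_smul]
  have hl' : ((α g g⁻¹ : K)⁻¹ • leftMul α g⁻¹) * leftMul α g = 1 := by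
    rwa [← left_inv_eq_right_inv hl hr]
  have hl' : ((α g g⁻¹ : K)⁻¹ • leftMul α g⁻¹) * leftMul α g = 1 := by
    rwa [← left_inv_eq_right_inv hl hr]
  have hl' : ((α g g⁻¹ : K)⁻¹ • leftMul α g⁻¹) * leftMul α g = 1 := by
    rwa [← left_inv_eq_right_inv hl hr]
  { val := ⟨leftMul α g, hmem g⟩
    inv := ⟨(α g g⁻¹ : K)⁻¹ • leftMul α g⁻¹, Subalgebra.smul_mem _ (hmem _) _⟩
    val_inv := Subtype.ext hr
    inv_val := Subtype.ext hl' }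

end TwistedGroupAlgebra

/-- Let `char K = p` and let `G` be `p`-nilpotent (it has a normal
subgroup `N` of order coprime to `p` with `G/N` a `p`-group) with cyclic Sylow
`p`-subgroups.  Then every left ideal `C` of the twisted group algebra
`K^αG = K[G,1,α]` is principal: it is generated by a single element as a one-sided
ideal. -/
theorem stmt6 [Field K] [Fintype K] [Group G] [Fintype G] [DecidableEq G]
    (p : ℕ) (hp : ringChar K = p)
    (α : G → G → Kˣ)
    (hnorm : ∀ g : G, α g 1 = 1 ∧ α 1 g = 1)
    (hcoc : ∀ g₁ g₂ g₃ : G, α g₁ (g₂ * g₃) * α g₂ g₃ = α (g₁ * g₂) g₃ * α g₁ g₂)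
    (N : Subgroup G) (hN : N.Normal) (hcop : Nat.Coprime (Nat.card N) p)
    (hquot : IsPGroup p (G ⧸ N))
    (hcyc : ∀ P : Sylow p G, IsCyclic P)
    (C : Submodule K (G → K))
    (hC : ∀ r : G → K, ∀ c ∈ C, tsMul (1 : G →* RingAut K) α r c ∈ C) :
    ∃ a : G → K,
      (C : Set (G → K)) = {x | ∃ r : G → K, x = tsMul (1 : G →* RingAut K) α r a} ∨
      (C : Set (G → K)) = {x | ∃ r : G → K, x = tsMul (1 : G →* RingAut K) α a r} := by
  have hchar : CharP K p := hp ▸ ringChar.charP K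
  have hpp : Fact p.Prime := ⟨CharP.char_is_prime K p⟩
  obtain ⟨x, hx⟩ := exists_generator_mod N hquot hcyc
  have : Fintype N := Fintype.ofFinite N
  have hcard : (Fintype.card N : K) ≠ 0 := by
    rw [Ne, CharP.cast_eq_zero_iff K p, ← Nat.card_eq_fintype_card]
    exact fun h => hpp.out.one_lt.ne' (Nat.eq_one_of_dvd_coprimes hcop h dvd_rfl)
  let A := twistedAlgebra α hnorm hcoc
  let u : G → Aˣ := basisUnit α hnorm hcoc
  have hu : ∀ g h, ∃ c : Kˣ, (u g * u h : A) = (c : K) • (u (g * h) : A) := fun g h =>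
    ⟨α g h, Subtype.ext (leftMul_mul hcoc g h)⟩
  have hspan : Submodule.span K (Set.range fun g => (u g : A)) = ⊤ := by
    rw [eq_top_iff]
    rintro ⟨a, ha⟩ -
    obtain ⟨r, rfl⟩ := (Submodule.mem_span_range_iff_exists_fun K).1 ha
    refine (Submodule.mem_span_range_iff_exists_fun K).2 ⟨r, Subtype.ext ?_⟩
    rw [AddSubmonoidClass.coe_finsetSum]
    rfl
  have hCA : ∀ (a : A), ∀ c ∈ C, a.1 c ∈ C := fun a c hc => by
    obtain ⟨r, hr⟩ := exists_tsMul_eq a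
    exact hr c ▸ hC r c hc
  -- The left ideal of `A` corresponding to `C` under `a ↦ a 1̄`.
  let I : Submodule A A :=
    { carrier := {a | a.1 tsOne ∈ C}
      add_mem' := fun ha hb => C.add_mem ha hb
      zero_mem' := C.zero_mem
      smul_mem' := fun b a ha => hCA b _ ha }
  obtain ⟨a, ha⟩ := exists_eq_span_singleton (k := K) (A := A) u hu hspan N hcard x hx I
  have haC : a.1 tsOne ∈ C := (ha ▸ Submodule.mem_span_singleton_self a : a ∈ I)
  refine ⟨a.1 tsOne, Or.inl (Set.ext fun c => ⟨fun hc => ?_, ?_⟩)⟩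
  · obtain ⟨b, rfl⟩ := exists_eq_tsMul (hnorm := hnorm) (hcoc := hcoc) c
    have hb : b ∈ I := hc
    rw [ha] at hb
    obtain ⟨d, rfl⟩ := Submodule.mem_span_singleton.1 hb
    obtain ⟨r, hr⟩ := exists_tsMul_eq d
    exact ⟨r, hr _⟩
  · rintro ⟨r, rfl⟩
    exact hC r _ haC
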